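/- The number of intervals in the Tamari lattice Tam_n equals (2/(n(n+1))) · C(4n+1, n-1) for all n ≥ 1. -/

import Mathlib

/-- Binary trees: a leaf or a binary node with two subtrees. -/
inductive BT : Type
  | leaf : BT
  | node : BT → BT → BT

namespace BT

/-- Number of binary (internal) nodes. -/
def size : BT → ℕ
  | leaf => 0
  | node l r => l.size + r.size + 1

/-- One right rotation somewhere in the tree: ((A,B),C) ↦ (A,(B,C)). -/
inductive Rot : BT → BT → Prop
  | rotate (A B C : BT) : Rot (node (node A B) C) (node A (node B C))
  | left {l l' : BT} (r : BT) : Rot l l' → Rot (node l r) (node l' r)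
  | right (l : BT) {r r' : BT} : Rot r r' → Rot (node l r) (node l r')

/-- Tamari order: reflexive-transitive closure of right rotation. -/
def tle (T T' : BT) : Prop := Relation.ReflTransGen Rot T T'

/-- Bracket-vector: sizes of right subtrees of nodes, in infix order. -/
def bracket : BT → List ℕ
  | leaf => []
  | node l r => bracket l ++ r.size :: bracket r

/-- Dual bracket-vector: sizes of left subtrees of nodes, in infix order. -/
def dualBracket : BT → List ℕ
  | leaf => []
  | node l r => dualBracket l ++ l.size :: dualBracket r

/-- Canopy word: for each leaf (left to right), 1 if it is a left child, 0 if a right child;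
the argument `b` is the value assigned to the tree if it is itself a leaf. -/
def canopyAux (b : ℕ) : BT → List ℕ
  | leaf => [b]
  | node l r => canopyAux 1 l ++ canopyAux 0 r

/-- Canopy-vector of a binary tree. -/
def canopy (T : BT) : List ℕ := canopyAux 1 T

/-- Left-right mirror. -/
def mir : BT → BT
  | leaf => leaf
  | node l r => node (mir r) (mir l)

/-- Tamari interval of size n. -/
def interval (p : BT × BT) (n : ℕ) : Prop :=
  p.1.size = n ∧ p.2.size = n ∧ tle p.1 p.2

/-- Tamari interval (of unspecified size). -/
def isInt (p : BT × BT) : Prop := p.1.size = p.2.size ∧ tle p.1 p.2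

/-- The rise operation (T,T') ↦ ((T,ε),(ε,T')). -/
def riseF (p : BT × BT) : BT × BT := (node p.1 leaf, node leaf p.2)

/-- An interval is modern when its rise is again an interval. -/
def modern (p : BT × BT) : Prop := tle (node p.1 leaf) (node leaf p.2)

/-- Infinitely modern: every iterated rise is an interval. -/
def infModern (p : BT × BT) : Prop :=
  ∀ k : ℕ, tle ((riseF^[k] p).1) ((riseF^[k] p).2)

/-- Synchronized: equal canopies. -/
def synced (p : BT × BT) : Prop := canopy p.1 = canopy p.2

/-- Self-dual: equal to its dual (mir T', mir T). -/
def selfDual (p : BT × BT) : Prop := mir p.2 = p.1 ∧ mir p.1 = p.2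

/-- Number of positions where the two canopies agree. -/
def agreeCount (p : BT × BT) : ℕ :=
  ((List.range (p.1.size + 1)).filter
    (fun i => (canopy p.1).getD i 0 == (canopy p.2).getD i 0)).length

/-- Number of canopy positions of joint type (a on top, b on bottom), for an interval (T,T')
with T' the upper tree. -/
def typeCount (a b : ℕ) (p : BT × BT) : ℕ :=
  ((List.range (p.1.size + 1)).filter
    (fun i => ((canopy p.2).getD i 0 == a) && ((canopy p.1).getD i 0 == b))).length

end BT

/-! The trees below `node L R` arise by choosing `T ≤ L` and `U ≤ R`, cutting `U` somewhere along
its leftmost branch and inserting `T` there. Marking one more than the length of the leftmost branch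
by a catalytic variable `x` turns this into a functional equation for the generating function
`F(t, x)` of intervals,
`(x - 1) F(t, x) = x (x - 1) + t x F(t, x) (F(t, x) - F(t, 1))`,
which has a unique power series solution. Substituting `t = z (1 - z)³` and letting `c` be the
series with `c = 1 + x z (1 - z) c²`, the solution is `x c (1 - z c) / (1 - z)`. At `x = 1` one has
`c = 1 / (1 - z)`, so `F(z (1 - z)³, 1) = (1 - 2 z) / (1 - z)³`, which determines `F(t, 1)`. The
closed form satisfies the same equation: comparing coefficients of `z ^ m` amounts to the vanishing
of the `m`-th finite difference of a polynomial of degree `m - 2`. -/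

open scoped Polynomial PowerSeries
open Finset (range)
open Finset.HasAntidiagonal (antidiagonal)

section PowerSeries

open PowerSeries

variable {R : Type*} [CommRing R]

theorem exists_eq_one_add_mul_sq {a : R⟦X⟧} (ha : constantCoeff a = 0) :
    ∃ c : R⟦X⟧, c = 1 + a * c ^ 2 := by
  have hsubst : HasSubst a := .of_constantCoeff_zero' ha
  have hcatalan := congrArg (fun f => substAlgHom (R := R) hsubst (map (Nat.castRingHom R) f))
    catalanSeries_sq_mul_X_add_one
  simp only [map_add, map_mul, map_pow, map_one, map_X, substAlgHom_X] at hcatalan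
  exact ⟨substAlgHom hsubst (map (Nat.castRingHom R) catalanSeries),
    by linear_combination -hcatalan⟩

/-- The factor `X` on the right makes the equation recursive: if `X ^ k` divides `P - Q`, then so
does `X ^ (k + 1)`. -/
theorem eq_of_catalytic_equation (φ : R →+* R) {r : R} (hr : IsLeftRegular r)
    {b c P Q : R⟦X⟧} (hP : C r * P = b + X * c * P * (P - map φ P))
    (hQ : C r * Q = b + X * c * Q * (Q - map φ Q)) : P = Q := by
  have hdiff : C r * (P - Q) =
      X * (c * ((P - Q) * (P - map φ P) + Q * ((P - Q) - map φ (P - Q)))) := by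
    rw [map_sub]
    linear_combination hP - hQ
  have hdvd (k : ℕ) : X ^ k ∣ P - Q := by
    induction k with
    | zero => simp
    | succ k ih =>
      have hmap : X ^ k ∣ map φ (P - Q) := by simpa using map_dvd (map φ) ih
      have hsucc : X ^ (k + 1) ∣ C r * (P - Q) := by
        rw [hdiff, pow_succ']
        exact mul_dvd_mul_left X (((ih.mul_right _).add ((ih.sub hmap).mul_left _)).mul_left _)
      refine X_pow_dvd_iff.2 fun m hm => ?_
      simpa [hr.mul_left_eq_zero_iff] using X_pow_dvd_iff.1 hsucc m hm
  ext n
  simpa [sub_eq_zero] using X_pow_dvd_iff.1 (hdvd (n + 1)) n n.lt_succ_self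

theorem subst_injective_of_isUnit_coeff_one {a : R⟦X⟧} (ha₀ : constantCoeff a = 0)
    (ha₁ : IsUnit (coeff 1 a)) : Function.Injective fun f : R⟦X⟧ => (f.subst a : R⟦X⟧) := by
  refine Function.LeftInverse.injective
    (g := fun f : R⟦X⟧ => (f.subst (a.substInvOfIsUnit ha₁) : R⟦X⟧)) fun f => ?_
  dsimp only
  rw [subst_comp_subst_apply (.of_constantCoeff_zero' ha₀) (HasSubst.substInvOfIsUnit a ha₁),
    subst_substInvOfIsUnit_right a ha₀ ha₁, X_subst]

theorem coeff_one_sub_X_pow (n j : ℕ) :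
    coeff j ((1 - X : R⟦X⟧) ^ n) = (-1) ^ j * n.choose j := by
  have h : (1 - X : R⟦X⟧) ^ n = rescale (-1 : R) (((1 + Polynomial.X) ^ n : R[X]) : R⟦X⟧) := by
    simp [sub_eq_add_neg]
  rw [h, coeff_rescale, Polynomial.coeff_coe, Polynomial.coeff_one_add_X_pow]

theorem coeff_mul_subst {a : R⟦X⟧} (ha : constantCoeff a = 0) (f g : R⟦X⟧) (m : ℕ) :
    coeff m (g * f.subst a) = ∑ k ∈ range (m + 1), coeff k f * coeff m (g * a ^ k) := by
  have hsubst : HasSubst a := .of_constantCoeff_zero' ha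
  have htail (h : R⟦X⟧) : coeff m (g * (a ^ (m + 1) * h)) = 0 :=
    X_pow_dvd_iff.1 (((pow_dvd_pow_of_dvd (X_dvd_iff.2 ha) _).mul_right h).mul_left g)
      m m.lt_succ_self
  have hsplit : substAlgHom (R := R) hsubst f =
      a ^ (m + 1) * substAlgHom (R := R) hsubst (mk fun i => coeff (i + (m + 1)) f) +
        ∑ k ∈ range (m + 1), C (coeff k f) * a ^ k := by
    conv_lhs => rw [eq_X_pow_mul_shift_add_trunc (m + 1) f]
    rw [map_add, map_mul, map_pow, substAlgHom_X, substAlgHom_coe, Polynomial.aeval_def,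
      eval₂_trunc_eq_sum_range]
    rfl
  rw [← coe_substAlgHom hsubst, hsplit, mul_add, map_add, htail, zero_add, Finset.mul_sum, map_sum]
  exact Finset.sum_congr rfl fun k _ => by rw [mul_left_comm, coeff_C_mul]

theorem hasSubst_X_mul_one_sub_X_pow (p : ℕ) : HasSubst (X * (1 - X) ^ p : R⟦X⟧) :=
  .of_constantCoeff_zero' (by simp)

theorem map_subst_X_mul_one_sub_X_pow {S : Type*} [CommRing S] (φ : R →+* S) (f : R⟦X⟧)
    (p : ℕ) : map φ (f.subst (X * (1 - X) ^ p : R⟦X⟧)) =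
      (map φ f).subst (X * (1 - X) ^ p : S⟦X⟧) := by
  have hmap : map φ (X * (1 - X) ^ p) = X * (1 - X) ^ p := by simp
  rw [← hmap]
  exact map_subst (hasSubst_X_mul_one_sub_X_pow p) f

theorem coeff_one_sub_X_pow_mul_subst (f : R⟦X⟧) (p q m : ℕ) :
    coeff m ((1 - X) ^ q * f.subst (X * (1 - X) ^ p : R⟦X⟧)) =
      ∑ k ∈ range (m + 1), coeff k f * ((-1) ^ (m - k) * (p * k + q).choose (m - k)) := by
  rw [coeff_mul_subst (by simp)]
  refine Finset.sum_congr rfl fun k hk => ?_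
  have hmul : (1 - X) ^ q * (X * (1 - X) ^ p) ^ k =
      X ^ k * (1 - X : R⟦X⟧) ^ (p * k + q) := by ring
  rw [hmul, coeff_X_pow_mul', if_pos (Finset.mem_range_succ_iff.1 hk), coeff_one_sub_X_pow]

end PowerSeries

namespace BT

/-- `graft B A` replaces the leftmost leaf of `B` by `A`. Grafting describes the trees below
`node L R`: they are obtained by undoing rotations that moved nodes of the right subtree up. -/
def graft : BT → BT → BT
  | leaf, A => A
  | node l r, A => node (graft l A) r

/-- The number of nodes on the leftmost branch; it is the statistic marked by the catalytic
variable. -/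
def spine : BT → ℕ
  | leaf => 0
  | node l _ => spine l + 1

theorem size_graft (B A : BT) : (graft B A).size = B.size + A.size := by
  induction B with
  | leaf => simp [graft, size]
  | node l r ihl _ => simp only [graft, size, ihl]; omega

theorem spine_graft (B A : BT) : spine (graft B A) = spine B + spine A := by
  induction B with
  | leaf => simp [graft, spine]
  | node l r ihl _ => simp only [graft, spine, ihl]; omega

theorem graft_node_inj {B B' T T' A A' : BT} (hsize : T.size = T'.size)
    (h : graft B (node T A) = graft B' (node T' A')) : B = B' ∧ T = T' ∧ A = A' := by
  induction B generalizing B' with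
  | leaf =>
    cases B' with
    | leaf => simpa [graft] using h
    | node l r =>
      have := congrArg size (node.inj h).1
      simp only [size_graft, size] at this
      omega
  | node l r ih _ =>
    cases B' with
    | leaf =>
      have := congrArg size (node.inj h).1
      simp only [size_graft, size] at this
      omega
    | node l' r' =>
      obtain ⟨hl, rfl⟩ := node.inj h
      obtain ⟨rfl, hTA⟩ := ih hl
      exact ⟨rfl, hTA⟩

theorem Rot.size_eq {T U : BT} (h : Rot T U) : T.size = U.size := by
  induction h with
  | rotate A B C => simp only [size]; omega
  | left r _ ih => simp only [size, ih]
  | right l _ ih => simp only [size, ih]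

theorem tle_of_rot {T U : BT} (h : Rot T U) : tle T U := Relation.ReflTransGen.single h

theorem tle_refl (T : BT) : tle T T := Relation.ReflTransGen.refl

theorem tle.trans {T U V : BT} (hTU : tle T U) (hUV : tle U V) : tle T V :=
  Relation.ReflTransGen.trans hTU hUV

theorem tle.size_eq {T U : BT} (h : tle T U) : T.size = U.size := by
  induction h with
  | refl => rfl
  | tail _ hrot ih => exact ih.trans hrot.size_eq

theorem tle.node_left {l l' : BT} (h : tle l l') (r : BT) : tle (node l r) (node l' r) :=
  Relation.ReflTransGen.lift (node · r) (fun _ _ => Rot.left r) _ _ h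

theorem tle.node_right (l : BT) {r r' : BT} (h : tle r r') : tle (node l r) (node l r') :=
  Relation.ReflTransGen.lift (node l) (fun _ _ => Rot.right l) _ _ h

theorem graft_node_tle (B T A : BT) : tle (graft B (node T A)) (node T (graft B A)) := by
  induction B with
  | leaf => exact tle_refl _
  | node l r ihl _ => exact (ihl.node_left r).trans (tle_of_rot (Rot.rotate _ _ _))

theorem Rot.exists_graft_of_graft_node {B T A S : BT} (h : Rot S (graft B (node T A))) :
    ∃ B' T' A', S = graft B' (node T' A') ∧ tle T' T ∧ tle (graft B' A') (graft B A) := by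
  induction B generalizing S with
  | leaf =>
    cases h with
    | rotate _ P Q => exact ⟨node leaf Q, T, P, rfl, tle_refl _, tle_refl _⟩
    | left _ h => exact ⟨leaf, _, A, rfl, tle_of_rot h, tle_refl _⟩
    | right _ h => exact ⟨leaf, T, _, rfl, tle_refl _, tle_of_rot h⟩
  | node l r ih _ =>
    cases h with
    | rotate _ P Q =>
      exact ⟨node (node l P) Q, T, A, rfl, tle_refl _, tle_of_rot (Rot.rotate _ _ _)⟩
    | left _ h =>
      obtain ⟨B', T', A', rfl, hT, hgraft⟩ := ih h
      exact ⟨node B' r, T', A', rfl, hT, hgraft.node_left r⟩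
    | @right _ r' _ h => exact ⟨node l r', T, A, rfl, tle_refl _, tle_of_rot (Rot.right _ h)⟩

theorem tle_node_iff {S L R : BT} : tle S (node L R) ↔
    ∃ B T A, S = graft B (node T A) ∧ tle T L ∧ tle (graft B A) R := by
  constructor
  · intro h
    induction h using Relation.ReflTransGen.head_induction_on with
    | refl => exact ⟨leaf, L, R, rfl, tle_refl _, tle_refl _⟩
    | head hrot _ ih =>
      obtain ⟨B, T, A, rfl, hT, hgraft⟩ := ih
      obtain ⟨B', T', A', rfl, hT', hgraft'⟩ := hrot.exists_graft_of_graft_node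
      exact ⟨B', T', A', rfl, hT'.trans hT, hgraft'.trans hgraft⟩
  · rintro ⟨B, T, A, rfl, hT, hgraft⟩
    exact (graft_node_tle B T A).trans ((hT.node_left _).trans (hgraft.node_right _))

theorem tle_leaf_iff {S : BT} : tle S leaf ↔ S = leaf := by
  refine ⟨fun h => ?_, fun h => h ▸ tle_refl _⟩
  cases S with
  | leaf => rfl
  | node l r => simpa [size] using h.size_eq

open Classical in
/-- The pairs `(B, A)` with `graft B A = T`: the cuts of `T` along its leftmost branch. -/
noncomputable def cuts : BT → Finset (BT × BT)
  | leaf => {(leaf, leaf)}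
  | node l r => insert (leaf, node l r) ((cuts l).image fun p => (node p.1 r, p.2))

theorem mem_cuts {T : BT} {p : BT × BT} : p ∈ cuts T ↔ graft p.1 p.2 = T := by
  obtain ⟨B, A⟩ := p
  induction T generalizing B with
  | leaf => cases B <;> simp [cuts, graft]
  | node l r ih _ => cases B <;> simp [cuts, graft, ih, eq_comm (a := r)]

theorem sum_cuts_pow_spine {R : Type*} [Semiring R] (x : R) (T : BT) :
    ∑ p ∈ cuts T, x ^ spine p.1 = ∑ k ∈ range (spine T + 1), x ^ k := by
  classical
  induction T with
  | leaf => simp [cuts, spine]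
  | node l r ih _ =>
    rw [cuts, Finset.sum_insert (by simp), Finset.sum_image (by grind [Set.InjOn]),
      Finset.sum_range_succ']
    simp only [spine, pow_succ, pow_zero, ← Finset.sum_mul, ih, add_comm]

open Classical in
/-- The principal ideal `{S | S ≤ T}` of the Tamari order, computed by recursion on `T`. -/
noncomputable def lower : BT → Finset BT
  | leaf => {leaf}
  | node L R => (lower L ×ˢ (lower R).biUnion cuts).image fun p => graft p.2.1 (node p.1 p.2.2)

theorem mem_lower {S T : BT} : S ∈ lower T ↔ tle S T := by
  classical
  induction T generalizing S with
  | leaf => simp [lower, tle_leaf_iff]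
  | node L R ihL ihR =>
    simp only [lower, tle_node_iff, Finset.mem_image, Finset.mem_product, Finset.mem_biUnion,
      mem_cuts, ihL, ihR, Prod.exists, exists_eq_right']
    grind

theorem sum_lower_node {M : Type*} [AddCommMonoid M] (f : BT → M) (L R : BT) :
    ∑ S ∈ lower (node L R), f S =
      ∑ T ∈ lower L, ∑ U ∈ lower R, ∑ p ∈ cuts U, f (graft p.1 (node T p.2)) := by
  classical
  have hinj : Set.InjOn (fun p : BT × BT × BT => graft p.2.1 (node p.1 p.2.2))
      (lower L ×ˢ (lower R).biUnion cuts : Finset (BT × BT × BT)) := by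
    rintro ⟨T, B, A⟩ h ⟨T', B', A'⟩ h' heq
    have hT := mem_lower.1 (Finset.mem_product.1 h).1
    have hT' := mem_lower.1 (Finset.mem_product.1 h').1
    obtain ⟨rfl, rfl, rfl⟩ := graft_node_inj (hT.size_eq.trans hT'.size_eq.symm) heq
    rfl
  have hdisj : (lower R : Set BT).PairwiseDisjoint cuts := fun U _ V _ hUV =>
    Finset.disjoint_left.2 fun p hU hV => hUV ((mem_cuts.1 hU).symm.trans (mem_cuts.1 hV))
  rw [lower, Finset.sum_image hinj, Finset.sum_product]
  simp only [Finset.sum_biUnion hdisj]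

/-- The bijection onto Mathlib's unlabelled binary trees, whose enumeration by number of nodes
it transfers to `BT`. -/
def toBinaryTree : BT → BinaryTree Unit
  | leaf => .nil
  | node l r => .node () l.toBinaryTree r.toBinaryTree

/-- The inverse of `BT.toBinaryTree`. -/
def ofBinaryTree : BinaryTree Unit → BT
  | .nil => leaf
  | .node _ l r => node (ofBinaryTree l) (ofBinaryTree r)

/-- `BT.toBinaryTree` as an equivalence. -/
def equivBinaryTree : BT ≃ BinaryTree Unit where
  toFun := toBinaryTree
  invFun := ofBinaryTree
  left_inv T := by induction T <;> simp [toBinaryTree, ofBinaryTree, *]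
  right_inv T := by induction T <;> simp [toBinaryTree, ofBinaryTree, *]

theorem numNodes_equivBinaryTree (T : BT) : (equivBinaryTree T).numNodes = T.size := by
  change T.toBinaryTree.numNodes = T.size
  induction T <;> simp [toBinaryTree, BinaryTree.numNodes, size, *]

/-- The finite set of trees with `n` internal nodes. -/
def treesOfSize (n : ℕ) : Finset BT :=
  (BinaryTree.treesOfNumNodesEq n).map equivBinaryTree.symm.toEmbedding

theorem mem_treesOfSize {n : ℕ} {T : BT} : T ∈ treesOfSize n ↔ T.size = n := by
  simp [treesOfSize, Finset.mem_map_equiv, numNodes_equivBinaryTree]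

theorem treesOfSize_zero : treesOfSize 0 = {leaf} := by
  ext T
  cases T <;> simp [mem_treesOfSize, size]

theorem sum_treesOfSize_succ {M : Type*} [AddCommMonoid M] (f : BT → M) (n : ℕ) :
    ∑ T ∈ treesOfSize (n + 1), f T =
      ∑ ij ∈ antidiagonal n, ∑ L ∈ treesOfSize ij.1, ∑ R ∈ treesOfSize ij.2, f (node L R) := by
  have hdisj : (antidiagonal n : Set (ℕ × ℕ)).PairwiseDisjoint fun ij =>
      BinaryTree.pairwiseNode (BinaryTree.treesOfNumNodesEq ij.1)
        (BinaryTree.treesOfNumNodesEq ij.2) := by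
    simp_rw [Set.PairwiseDisjoint, Set.Pairwise, Finset.disjoint_left]
    aesop
  simp only [treesOfSize, Finset.sum_map, BinaryTree.treesOfNumNodesEq_succ,
    Finset.sum_biUnion hdisj, Finset.sum_product]
  rfl

section TamariPolynomial

open Polynomial

variable (R : Type*) [CommRing R]

/-- The Tamari polynomial of `T`: the generating polynomial of the trees below `T`, with `X`
marking one more than the length of the leftmost branch. -/
noncomputable def lowerPoly (T : BT) : R[X] := ∑ S ∈ lower T, X ^ (spine S + 1)

theorem eval_one_lowerPoly (T : BT) : (lowerPoly R T).eval 1 = (lower T).card := by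
  simp [lowerPoly, eval_finsetSum]

theorem lowerPoly_leaf : lowerPoly R leaf = X := by
  simp [lowerPoly, lower, spine]

theorem X_sub_one_mul_lowerPoly_node (L U : BT) :
    (X - 1) * lowerPoly R (node L U) =
      X * lowerPoly R L * (lowerPoly R U - C ((lowerPoly R U).eval 1)) := by
  have hfactor : lowerPoly R (node L U) =
      X * lowerPoly R L * ∑ S ∈ lower U, ∑ k ∈ range (spine S + 1), X ^ k := by
    simp only [lowerPoly, sum_lower_node, spine_graft, spine, ← sum_cuts_pow_spine,
      Finset.mul_sum, Finset.sum_mul]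
    rw [Finset.sum_comm]
    refine Finset.sum_congr rfl fun V _ => ?_
    rw [Finset.sum_comm]
    exact Finset.sum_congr rfl fun p _ => Finset.sum_congr rfl fun T _ => by ring
  have hgeom : (X - 1) * ∑ S ∈ lower U, ∑ k ∈ range (spine S + 1), (X : R[X]) ^ k =
      lowerPoly R U - C ((lowerPoly R U).eval 1) := by
    rw [eval_one_lowerPoly, lowerPoly, Finset.mul_sum]
    simp [mul_geom_sum]
  rw [hfactor, ← hgeom]
  ring

/-- The generating polynomial of the intervals of size `n`, with `X` marking one more than the
length of the leftmost branch of the lower tree. -/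
noncomputable def intervalPoly (n : ℕ) : R[X] := ∑ T ∈ treesOfSize n, lowerPoly R T

theorem intervalPoly_zero : intervalPoly R 0 = X := by
  simp [intervalPoly, treesOfSize_zero, lowerPoly_leaf]

theorem eval_one_intervalPoly (n : ℕ) :
    (intervalPoly R n).eval 1 = Set.ncard {p : BT × BT | interval p n} := by
  have hset : {p : BT × BT | interval p n} =
      (fun q : (_ : BT) × BT => (q.2, q.1)) '' ((treesOfSize n).sigma lower) := by
    ext ⟨S, T⟩
    have : tle S T → S.size = T.size := tle.size_eq
    simp only [interval, Set.mem_ofPred_eq, Set.mem_image, Finset.mem_coe, Finset.mem_sigma,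
      mem_treesOfSize, mem_lower, Prod.mk.injEq, Sigma.exists]
    grind
  have hinj : Function.Injective fun q : (_ : BT) × BT => (q.2, q.1) := by
    rintro ⟨T, S⟩ ⟨T', S'⟩ h
    simp_all
  rw [hset, Set.ncard_image_of_injective _ hinj, Set.ncard_coe_finset, Finset.card_sigma]
  simp [intervalPoly, eval_finsetSum, eval_one_lowerPoly]

theorem X_sub_one_mul_intervalPoly_succ (n : ℕ) :
    (X - 1) * intervalPoly R (n + 1) = X * ∑ ij ∈ antidiagonal n,
      intervalPoly R ij.1 * (intervalPoly R ij.2 - C ((intervalPoly R ij.2).eval 1)) := by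
  simp only [intervalPoly, sum_treesOfSize_succ, eval_finsetSum, map_sum,
    ← Finset.sum_sub_distrib, Finset.sum_mul_sum]
  simp only [Finset.mul_sum, X_sub_one_mul_lowerPoly_node, mul_assoc]

end TamariPolynomial

section FunctionalEquation

open PowerSeries

variable (R : Type*) [CommRing R]

/-- The bivariate generating function of Tamari intervals: the power series variable marks the
size and the polynomial variable is the catalytic one. -/
noncomputable def intervalGF : R[X]⟦X⟧ := mk (intervalPoly R)

/-- The generating function of Tamari intervals by size. -/
noncomputable def intervalCountGF : R⟦X⟧ :=
  mk fun n => (Set.ncard {p : BT × BT | interval p n} : R)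

/-- The substitution `X ↦ 1` on polynomials, as an endomorphism. -/
noncomputable def substOne : R[X] →+* R[X] := Polynomial.C.comp (Polynomial.evalRingHom 1)

theorem map_substOne_intervalGF :
    map (substOne R) (intervalGF R) = map Polynomial.C (intervalCountGF R) := by
  ext1 n
  simp [intervalGF, intervalCountGF, substOne, eval_one_intervalPoly]

theorem intervalGF_functional_equation :
    C (Polynomial.X - 1) * intervalGF R = C (Polynomial.X * (Polynomial.X - 1)) +
      X * C Polynomial.X * intervalGF R * (intervalGF R - map (substOne R) (intervalGF R)) := by
  ext1 n
  rw [map_add, mul_assoc X, mul_assoc X, mul_assoc (C Polynomial.X)]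
  cases n with
  | zero => simp [intervalGF, intervalPoly_zero, mul_comm]
  | succ n =>
    rw [coeff_C_mul, coeff_C, coeff_succ_X_mul, coeff_C_mul, coeff_mul, if_neg n.succ_ne_zero,
      zero_add]
    simpa [intervalGF, substOne] using X_sub_one_mul_intervalPoly_succ R n

end FunctionalEquation

section Parametrization

open PowerSeries

variable {R : Type*} [CommRing R]

/-- This is the functional equation at `t = z (1 - z)³` for `F = x c (1 - z c) b`, with
`(1 - 2 z) b³` in place of its value at `x = 1`. -/
theorem catalytic_parametrization {x z b c : R} (hb : (1 - z) * b = 1)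
    (hc : c = 1 + x * (z * (1 - z)) * c ^ 2) :
    (x - 1) * (x * c * (1 - z * c) * b) = x * (x - 1) + z * (1 - z) ^ 3 * x *
      (x * c * (1 - z * c) * b) * (x * c * (1 - z * c) * b - (1 - 2 * z) * b ^ 3) := by
  have hnumerator : (x - 1) * (x * c * (1 - z * c)) = x * (x - 1) * (1 - z) +
      x * z * (x * c * (1 - z * c)) * ((1 - z) ^ 2 * (x * c * (1 - z * c)) - (1 - 2 * z)) := by
    linear_combination (-x * (1 - z - z * c) + x ^ 2 * (1 - z) * (1 - z * c) ^ 2) * hc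
  linear_combination b * hnumerator + (x * (x - 1) - x * z * (x * c * (1 - z * c)) * b *
    ((1 - z) ^ 2 * (x * c * (1 - z * c)) -
      (1 - 2 * z) * (((1 - z) * b) ^ 2 + (1 - z) * b + 1))) * hb

theorem one_sub_X_mul_eq_one_of_eq_one_add_mul_sq {c : R⟦X⟧}
    (hc : c = 1 + X * (1 - X) * c ^ 2) : (1 - X) * c = 1 := by
  have hunit : IsUnit (X * c - 1) := isUnit_iff_constantCoeff.2 (by simp)
  refine sub_eq_zero.1 (hunit.mul_right_eq_zero.1 ?_)
  linear_combination -hc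

theorem exists_parametrized_solution : ∃ G : R[X]⟦X⟧,
    C (Polynomial.X - 1) * G = C (Polynomial.X * (Polynomial.X - 1)) +
      X * ((1 - X) ^ 3 * C Polynomial.X) * G * (G - map (substOne R) G) ∧
    (1 - X) ^ 3 * map (substOne R) G = 1 - 2 * X := by
  let e : R[X]⟦X⟧ →+* R[X]⟦X⟧ := map (substOne R)
  let x : R[X]⟦X⟧ := C Polynomial.X
  let b : R[X]⟦X⟧ := mk 1
  have hb : (1 - X) * b = 1 := by rw [mul_comm]; exact mk_one_mul_one_sub_eq_one R[X]
  obtain ⟨c, hc⟩ := exists_eq_one_add_mul_sq (a := x * (X * (1 - X))) (by simp)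
  have heX : e X = X := map_X _
  have hex : e x = 1 := by simp [e, x, substOne]
  have heb : e b = b := by ext1 n; simp [e, b]
  have hec : e c = b := by
    have := one_sub_X_mul_eq_one_of_eq_one_add_mul_sq (c := e c)
      (by simpa [heX, hex] using congrArg e hc)
    linear_combination b * this - e c * hb
  have heG : e (x * c * (1 - X * c) * b) = (1 - 2 * X) * b ^ 3 := by
    simp only [map_mul, map_sub, map_one, heX, hex, heb, hec]
    linear_combination -b ^ 2 * hb
  refine ⟨x * c * (1 - X * c) * b, ?_, ?_⟩
  · rw [heG]
    simpa [x, ← mul_assoc] using catalytic_parametrization hb hc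
  · rw [heG, mul_left_comm, ← mul_pow, hb, one_pow, mul_one]

theorem subst_intervalGF_functional_equation :
    C (Polynomial.X - 1) * (intervalGF R).subst (X * (1 - X) ^ 3 : R[X]⟦X⟧) =
      C (Polynomial.X * (Polynomial.X - 1)) + X * ((1 - X) ^ 3 * C Polynomial.X) *
        (intervalGF R).subst (X * (1 - X) ^ 3 : R[X]⟦X⟧) *
          ((intervalGF R).subst (X * (1 - X) ^ 3 : R[X]⟦X⟧) -
            map (substOne R) ((intervalGF R).subst (X * (1 - X) ^ 3 : R[X]⟦X⟧))) := by
  let σ := substAlgHom (R := R[X]) (hasSubst_X_mul_one_sub_X_pow (R := R[X]) 3)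
  have hC (r : R[X]) : σ (C r) = C r := by
    rw [coe_substAlgHom]
    exact subst_C r
  have hX : σ X = X * (1 - X) ^ 3 := substAlgHom_X _
  have h := congrArg σ (intervalGF_functional_equation R)
  simp only [map_mul σ, map_add σ, map_sub σ, hC, hX] at h
  rw [map_subst_X_mul_one_sub_X_pow, ← coe_substAlgHom (hasSubst_X_mul_one_sub_X_pow 3)]
  linear_combination h

theorem one_sub_X_pow_three_mul_subst_intervalCountGF :
    (1 - X) ^ 3 * (intervalCountGF R).subst (X * (1 - X) ^ 3 : R⟦X⟧) = 1 - 2 * X := by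
  obtain ⟨G, hG, hG₁⟩ := exists_parametrized_solution (R := R)
  have hreg : IsLeftRegular (Polynomial.X - 1 : R[X]) :=
    (Polynomial.monic_X_sub_C (1 : R)).isRegular.left
  rw [← eq_of_catalytic_equation (substOne R) hreg subst_intervalGF_functional_equation hG,
    map_subst_X_mul_one_sub_X_pow, map_substOne_intervalGF,
    ← map_subst_X_mul_one_sub_X_pow] at hG₁
  refine map_injective Polynomial.C Polynomial.C_injective ?_
  simpa [map_ofNat] using hG₁

end Parametrization

section Coefficients

open PowerSeries

/-- The closed form `2 (4k+1)! / ((k+1)! (3k+2)!)` for the number of Tamari intervals of size `k`;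
it takes the right value also at `k = 0`. -/
def tamariNumber (k : ℕ) : ℚ :=
  2 * (4 * k + 1).factorial / ((k + 1).factorial * (3 * k + 2).factorial)

theorem mul_succ_mul_tamariNumber {n : ℕ} (hn : 1 ≤ n) :
    n * (n + 1) * tamariNumber n = 2 * (4 * n + 1).choose (n - 1) := by
  obtain ⟨n, rfl⟩ := Nat.exists_eq_add_of_le' hn
  rw [tamariNumber, Nat.add_sub_cancel, Nat.cast_choose ℚ (by omega),
    show 4 * (n + 1) + 1 - n = 3 * (n + 1) + 2 by omega, Nat.factorial_succ (n + 1),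
    Nat.factorial_succ n]
  push_cast
  field_simp

theorem tamariNumber_mul_choose {m k : ℕ} (hm : 2 ≤ m) (hk : k ≤ m) :
    tamariNumber k * (3 * k + 3).choose (m - k) =
      6 / m.factorial * (m.choose k * (4 * k + 1).descFactorial (m - 2)) := by
  rcases le_or_gt m (4 * k + 3) with h | h
  · have hdesc : ((4 * k + 3 - m).factorial : ℚ) * (4 * k + 1).descFactorial (m - 2) =
        (4 * k + 1).factorial := by
      have := Nat.factorial_mul_descFactorial (show m - 2 ≤ 4 * k + 1 by omega)
      rw [show 4 * k + 1 - (m - 2) = 4 * k + 3 - m by omega] at this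
      exact_mod_cast this
    rw [tamariNumber, Nat.cast_choose ℚ (show m - k ≤ 3 * k + 3 by omega), Nat.cast_choose ℚ hk,
      ← hdesc, show 3 * k + 3 - (m - k) = 4 * k + 3 - m by omega,
      Nat.factorial_succ (3 * k + 2), Nat.factorial_succ k]
    push_cast
    field_simp
    ring
  · rw [Nat.choose_eq_zero_of_lt (by omega), Nat.descFactorial_eq_zero_iff_lt.2 (by omega)]
    simp

/-- Up to a factor, this is the `m`-th finite difference of a polynomial of degree `m - 2`. -/
theorem sum_tamariNumber_mul_choose {m : ℕ} (hm : 2 ≤ m) :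
    ∑ k ∈ range (m + 1), tamariNumber k * ((-1) ^ (m - k) * (3 * k + 3).choose (m - k)) = 0 := by
  let P : ℚ[X] := (descPochhammer ℚ (m - 2)).comp (4 * Polynomial.X + 1)
  have hdeg : P.natDegree < m := by
    have hlinear : (4 * Polynomial.X + 1 : ℚ[X]).natDegree ≤ 1 := by compute_degree
    calc P.natDegree ≤ (m - 2) * (4 * Polynomial.X + 1 : ℚ[X]).natDegree := by
          simpa [P] using Polynomial.natDegree_comp_le (p := descPochhammer ℚ (m - 2))
      _ ≤ (m - 2) * 1 := Nat.mul_le_mul_left _ hlinear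
      _ < m := by omega
  have hdiff := congrFun (Polynomial.fwdDiff_iter_eq_zero_of_degree_lt hdeg) 0
  rw [fwdDiff_iter_eq_sum_shift] at hdiff
  have heval (k : ℕ) : P.eval (0 + k • 1) = (4 * k + 1).descFactorial (m - 2) := by
    rw [← descPochhammer_eval_eq_descFactorial]
    simp [P, Polynomial.eval_comp]
  refine Eq.trans ?_ (mul_eq_zero_of_right (6 / m.factorial : ℚ) hdiff)
  rw [Finset.mul_sum]
  refine Finset.sum_congr rfl fun k hk => ?_
  rw [heval, zsmul_eq_mul]
  push_cast
  linear_combination (-1) ^ (m - k) *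
    tamariNumber_mul_choose hm (Finset.mem_range_succ_iff.1 hk)

theorem one_sub_X_pow_three_mul_subst_tamariNumber :
    (1 - X) ^ 3 * (mk tamariNumber).subst (X * (1 - X) ^ 3 : ℚ⟦X⟧) = 1 - 2 * X := by
  ext m
  rw [coeff_one_sub_X_pow_mul_subst, ← map_ofNat (C (R := ℚ)) 2, map_sub, coeff_C_mul]
  simp only [coeff_mk]
  match m with
  | 0 => simp [tamariNumber]
  | 1 => norm_num [Finset.sum_range_succ, tamariNumber, Nat.factorial, coeff_one]
  | m + 2 => simpa [coeff_one, coeff_X] using sum_tamariNumber_mul_choose (by omega)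

theorem intervalCountGF_eq_mk_tamariNumber : intervalCountGF ℚ = mk tamariNumber := by
  have hunit : IsUnit ((1 - X : ℚ⟦X⟧) ^ 3) := isUnit_iff_constantCoeff.2 (by simp)
  exact subst_injective_of_isUnit_coeff_one (by simp) (by simp)
    (hunit.mul_right_injective (one_sub_X_pow_three_mul_subst_intervalCountGF.trans
      one_sub_X_pow_three_mul_subst_tamariNumber.symm))

end Coefficients

end BT

theorem count_tamari_intervals (n : ℕ) (hn : 1 ≤ n) :
    n * (n + 1) * Set.ncard {p : BT × BT | BT.interval p n} =
      2 * Nat.choose (4 * n + 1) (n - 1) := by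
  have hcount : (Set.ncard {p : BT × BT | BT.interval p n} : ℚ) = BT.tamariNumber n := by
    simpa [BT.intervalCountGF] using
      congrArg (PowerSeries.coeff n) BT.intervalCountGF_eq_mk_tamariNumber
  have hclosed := BT.mul_succ_mul_tamariNumber hn
  rw [← hcount] at hclosed
  exact_mod_cast hclosed
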